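/- arXiv:2012.02563 — 3 statements merged into one kernel-verified Lean document; each statement's English description precedes it below -/
import Mathlib

section
/- For every positive integer n, the sum of the fourth powers of the binomial coefficients satisfies ∑_{k=0}^{n} C(n,k)^4 = ∑_{k=0}^{n} C(n,k)^2 · C(2k,n) · C(2n−k,n). -/
/-!
The Pfaff–Saalschütz identity linearizes a product of binomial coefficients: for `i + j = n`,
`C(n,i) C(n,j) = ∑ₖ C(i,k) C(j,k) C(n+k,n)`. Apply it to one of the two factors `C(n,i) C(n,j)` of
`C(n,i)⁴` and exchange the sums. The remaining factor merges with the `k`-dependent coefficients,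
since `C(n,i) C(j,k) = C(n,k) C(n-k,i)`, so the sum over `i` becomes a Vandermonde convolution with
value `C(n,k)² C(2(n-k),n)`. Reversing the sum over `k` gives the right-hand side.
-/

open Finset

theorem choose_mul_choose_sub_comm (n a b : ℕ) :
    n.choose a * (n - a).choose b = n.choose b * (n - b).choose a := by
  have ha := Nat.choose_mul (n := n) (Nat.le_add_right a b)
  have hb := Nat.choose_mul (n := n) (Nat.le_add_left b a)
  rw [Nat.add_sub_cancel_left] at ha
  rw [Nat.add_sub_cancel_right] at hb
  rw [← ha, ← hb, Nat.choose_symm_add]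

theorem sum_antidiagonal_choose_mul_choose_add {m b : ℕ} (hmb : m ≤ b) (n c : ℕ) :
    ∑ p ∈ antidiagonal b, m.choose p.1 * n.choose (c + p.2) = (m + n).choose (c + b) := by
  have vanish : ∀ i ≥ b + 1, m.choose i * n.choose (c + b - i) = 0 := fun i hi ↦ by
    rw [Nat.choose_eq_zero_of_lt (by lia), zero_mul]
  rw [Nat.add_choose_eq, Nat.sum_antidiagonal_eq_sum_range_succ_mk,
    Nat.sum_antidiagonal_eq_sum_range_succ_mk,
    eventually_constant_sum vanish (by lia : b + 1 ≤ (c + b).succ)]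
  refine sum_congr rfl fun i hi ↦ ?_
  rw [Nat.add_sub_assoc (mem_range_succ_iff.mp hi)]

theorem sum_choose_mul_choose_mul_choose (a b i : ℕ) :
    ∑ k ∈ range (a + 1), a.choose k * b.choose k * k.choose i =
      a.choose i * (a - i + b).choose a := by
  rw [Nat.add_choose_eq, ← Nat.sum_antidiagonal_swap, Nat.sum_antidiagonal_eq_sum_range_succ_mk,
    mul_sum]
  refine sum_congr rfl fun k hk ↦ ?_
  have hka : k ≤ a := mem_range_succ_iff.mp hk
  have merge := choose_mul_choose_sub_comm a (a - k) i
  rw [Nat.choose_symm hka, Nat.sub_sub_self hka] at merge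
  rw [Prod.fst_swap, Prod.snd_swap, ← mul_assoc, ← merge]
  ring

/-- The Pfaff–Saalschütz identity in binomial form. After expanding `(x + k).choose (a + b)` by
Vandermonde, the sum over `k` and then the remaining sum are again Vandermonde convolutions. -/
theorem sum_choose_mul_choose_mul_add_choose (x a b : ℕ) :
    ∑ k ∈ range (a + 1), a.choose k * b.choose k * (x + k).choose (a + b) =
      x.choose a * x.choose b := by
  have expand (k : ℕ) : a.choose k * b.choose k * (x + k).choose (a + b) =
      ∑ p ∈ antidiagonal b, x.choose (a + p.2) * (a.choose k * b.choose k * k.choose p.1) := by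
    rcases lt_or_ge b k with hbk | hkb
    · simp [Nat.choose_eq_zero_of_lt hbk]
    · rw [add_comm x, ← sum_antidiagonal_choose_mul_choose_add hkb, mul_sum]
      exact sum_congr rfl fun p _ ↦ by ring
  have merge : ∀ p ∈ antidiagonal b, x.choose (a + p.2) * (a.choose p.1 * (a - p.1 + b).choose a) =
      x.choose a * (a.choose p.1 * (x - a).choose p.2) := by
    intro ⟨i, j⟩ hp
    obtain rfl : i + j = b := mem_antidiagonal.mp hp
    rcases lt_or_ge a i with hai | hia
    · simp [Nat.choose_eq_zero_of_lt hai]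
    · have trinomial := Nat.choose_mul (n := x) (Nat.le_add_right a j)
      rw [Nat.add_sub_cancel_left] at trinomial
      rw [← add_assoc, Nat.sub_add_cancel hia, mul_left_comm, trinomial, mul_left_comm]
  rw [sum_congr rfl fun k _ ↦ expand k, sum_comm]
  simp only [← mul_sum, sum_choose_mul_choose_mul_choose]
  rw [sum_congr rfl merge, ← mul_sum, ← Nat.add_choose_eq]
  rcases lt_or_ge x a with hxa | hax
  · simp [Nat.choose_eq_zero_of_lt hxa]
  · rw [Nat.add_sub_cancel' hax]

theorem choose_mul_choose_eq_sum_range (i j : ℕ) :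
    (i + j).choose i * (i + j).choose j =
      ∑ k ∈ range (i + j + 1), i.choose k * j.choose k * (i + j + k).choose (i + j) := by
  have vanish : ∀ k ≥ i + 1, i.choose k * j.choose k * (i + j + k).choose (i + j) = 0 :=
    fun k hk ↦ by simp [Nat.choose_eq_zero_of_lt hk]
  rw [eventually_constant_sum vanish (by lia), sum_choose_mul_choose_mul_add_choose]

theorem sum_antidiagonal_choose_mul_choose (n k l : ℕ) :
    ∑ p ∈ antidiagonal n, n.choose p.1 * n.choose p.2 * (p.1.choose k * p.2.choose l) =
      n.choose k * n.choose l * (n - k + (n - l)).choose n := by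
  rw [add_comm (n - k), Nat.add_choose_eq, mul_sum]
  refine sum_congr rfl fun ⟨i, j⟩ hp ↦ ?_
  obtain rfl : i + j = n := mem_antidiagonal.mp hp
  have merge_fst := choose_mul_choose_sub_comm (i + j) j k
  have merge_snd := choose_mul_choose_sub_comm (i + j) i l
  rw [Nat.add_sub_cancel_right] at merge_fst
  rw [Nat.add_sub_cancel_left] at merge_snd
  calc
    _ = ((i + j).choose j * i.choose k) * ((i + j).choose i * j.choose l) := by ring
    _ = _ := by rw [merge_fst, merge_snd]; ring

theorem sum_range_choose_pow_four (n : ℕ) :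
    ∑ k ∈ range (n + 1), n.choose k ^ 4 =
      ∑ k ∈ range (n + 1), n.choose k ^ 2 * (2 * (n - k)).choose n * (n + k).choose n := by
  calc ∑ k ∈ range (n + 1), n.choose k ^ 4
    _ = ∑ p ∈ antidiagonal n, n.choose p.1 * n.choose p.2 * (n.choose p.1 * n.choose p.2) := by
        rw [Nat.sum_antidiagonal_eq_sum_range_succ_mk]
        refine sum_congr rfl fun k hk ↦ ?_
        rw [Nat.choose_symm (mem_range_succ_iff.mp hk)]
        ring
    _ = ∑ p ∈ antidiagonal n, ∑ k ∈ range (n + 1), (n + k).choose n *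
          (n.choose p.1 * n.choose p.2 * (p.1.choose k * p.2.choose k)) := by
        refine sum_congr rfl fun ⟨i, j⟩ hp ↦ ?_
        obtain rfl : i + j = n := mem_antidiagonal.mp hp
        nth_rw 2 [choose_mul_choose_eq_sum_range]
        rw [mul_sum]
        exact sum_congr rfl fun k _ ↦ by ring
    _ = ∑ k ∈ range (n + 1), (n + k).choose n *
          (n.choose k * n.choose k * (n - k + (n - k)).choose n) := by
        rw [sum_comm]
        simp only [← mul_sum, sum_antidiagonal_choose_mul_choose]
    _ = ∑ k ∈ range (n + 1), n.choose k ^ 2 * (2 * (n - k)).choose n * (n + k).choose n :=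
        sum_congr rfl fun k _ ↦ by rw [← two_mul]; ring

theorem franel4_strehl (n : ℕ) (hn : 0 < n) :
    ∑ k ∈ Finset.range (n + 1), (n.choose k) ^ 4 =
      ∑ k ∈ Finset.range (n + 1),
        (n.choose k) ^ 2 * ((2 * k).choose n) * ((2 * n - k).choose n) := by
  rw [sum_range_choose_pow_four, ← sum_range_reflect]
  refine sum_congr rfl fun k hk ↦ ?_
  have hkn : k ≤ n := mem_range_succ_iff.mp hk
  rw [Nat.add_sub_cancel, Nat.choose_symm hkn, Nat.sub_sub_self hkn, ← Nat.add_sub_assoc hkn,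
    ← two_mul]
end

section
/- For all nonnegative integers n, m and every complex number x, the Riordan identity holds: ∑_{k=0}^{n} C(n,k) · C(m,n−k) · C(x+n−k, n+m) = C(x,n) · C(x,m). -/
/-- The generalized binomial coefficient `x(x-1)⋯(x-j+1)/j!` for complex `x`. -/
noncomputable def cchoose (x : ℂ) (j : ℕ) : ℂ :=
  (∏ i ∈ Finset.range j, (x - i)) / (j.factorial : ℂ)

/-!
Expand both sides in the binomial coefficients `C(x, l)` by the Chu-Vandermonde identity.

On the right, `C(x, m) = C((x - n) + n, m) = ∑ C(n, i) C(x - n, m - i)`, and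
`C(x, n) C(x - n, l - n) = C(l, n) C(x, l)`, so with `i + l = n + m` the coefficient of `C(x, l)` is
`C(n, i) C(l, n)`.

On the left, `C(x + j, n + m) = ∑ C(j, i) C(x, l)`, so the coefficient of `C(x, l)` is
`∑ C(n, k) C(m, j) C(j, i)` over `k + j = n`. Trinomial revision turns `C(n, k) C(j, i)` into
`C(n, i) C(n - i, k)`, and `∑ C(n - i, k) C(m, j) = C(n - i + m, n) = C(l, n)`.
-/

section NatChoose

open Finset

theorem add_choose_mul_choose (k j i : ℕ) :
    (k + j).choose k * j.choose i = (k + j).choose i * (k + j - i).choose k := by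
  rcases le_or_gt i j with hij | hji
  · rw [Nat.choose_symm_add, Nat.choose_mul hij]
    congr 1
    exact Nat.choose_symm_of_eq_add (by lia)
  · rw [Nat.choose_eq_zero_of_lt hji, mul_zero, eq_comm, mul_eq_zero]
    simp only [Nat.choose_eq_zero_iff]
    lia

theorem sum_antidiagonal_choose_mul_choose_mul_choose {n m i l : ℕ} (h : i + l = n + m) :
    ∑ p ∈ antidiagonal n, n.choose p.1 * m.choose p.2 * p.2.choose i =
      n.choose i * l.choose n := by
  have revision : ∀ p ∈ antidiagonal n, n.choose p.1 * m.choose p.2 * p.2.choose i =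
      n.choose i * ((n - i).choose p.1 * m.choose p.2) := fun p hp ↦ by
    rw [mul_right_comm, ← mul_assoc, ← mem_antidiagonal.mp hp, add_choose_mul_choose]
  rw [sum_congr rfl revision, ← mul_sum, ← Nat.add_choose_eq]
  rcases le_or_gt i n with hin | hni
  · rw [show n - i + m = l by lia]
  · simp only [Nat.choose_eq_zero_of_lt hni, zero_mul]

end NatChoose

section BinomialRing

open Finset

variable {R : Type*} [Ring R] [BinomialRing R]

theorem ringChoose_add_natCast (x : R) (j k : ℕ) :
    Ring.choose (x + j) k = ∑ p ∈ antidiagonal k, j.choose p.1 • Ring.choose x p.2 := by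
  simp only [add_comm x, Ring.add_choose_eq k (Nat.cast_commute j x), Ring.choose_natCast,
    nsmul_eq_mul]

theorem ringChoose_mul_ringChoose (x : R) (n m : ℕ) :
    Ring.choose x n * Ring.choose x m =
      ∑ p ∈ antidiagonal (n + m), (n.choose p.1 * p.2.choose n) • Ring.choose x p.2 := by
  have truncate : ∀ p ∈ antidiagonal (n + m),
      (n.choose p.1 * p.2.choose n) • Ring.choose x p.2 ≠ 0 → n ≤ p.2 := fun p _ hp ↦ by
    contrapose! hp
    rw [Nat.choose_eq_zero_of_lt hp, mul_zero, zero_nsmul]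
  calc Ring.choose x n * Ring.choose x m
      = Ring.choose x n * Ring.choose (x - n + n) m := by rw [sub_add_cancel]
    _ = ∑ p ∈ antidiagonal m,
          n.choose p.1 • (Ring.choose x n * Ring.choose (x - n) p.2) := by
        simp only [ringChoose_add_natCast, mul_sum, mul_smul_comm]
    _ = ∑ p ∈ antidiagonal m,
          (n.choose p.1 * (p.2 + n).choose n) • Ring.choose x (p.2 + n) := by
        simp only [mul_smul, Ring.choose_smul_choose x (Nat.le_add_left n _), Nat.add_sub_cancel]
    _ = ∑ p ∈ antidiagonal (n + m), (n.choose p.1 * p.2.choose n) • Ring.choose x p.2 := by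
        rw [← sum_filter_of_ne truncate,
          Nat.antidiagonal_filter_le_snd_of_le (Nat.le_add_right n m), sum_map,
          Nat.add_sub_cancel_left]
        rfl

theorem riordan_identity_general (n m : ℕ) (x : R) :
    ∑ p ∈ antidiagonal n, (n.choose p.1 * m.choose p.2) • Ring.choose (x + p.2) (n + m) =
      Ring.choose x n * Ring.choose x m := by
  calc ∑ p ∈ antidiagonal n, (n.choose p.1 * m.choose p.2) • Ring.choose (x + p.2) (n + m)
      = ∑ q ∈ antidiagonal (n + m),
          (∑ p ∈ antidiagonal n, n.choose p.1 * m.choose p.2 * p.2.choose q.1) •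
            Ring.choose x q.2 := by
        simp only [ringChoose_add_natCast, smul_sum, sum_smul, mul_smul]
        exact sum_comm
    _ = ∑ q ∈ antidiagonal (n + m), (n.choose q.1 * q.2.choose n) • Ring.choose x q.2 :=
        sum_congr rfl fun q hq ↦ by
          rw [sum_antidiagonal_choose_mul_choose_mul_choose (mem_antidiagonal.mp hq)]
    _ = Ring.choose x n * Ring.choose x m := (ringChoose_mul_ringChoose x n m).symm

end BinomialRing

theorem ringChoose_eq_prod_div_factorial {K : Type*} [Field K] [CharZero K] (x : K) (j : ℕ) :
    Ring.choose x j = (∏ i ∈ Finset.range j, (x - i)) / (j.factorial : K) := by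
  rw [Ring.choose_eq_smul, ← Polynomial.aeval_eq_smeval, Polynomial.aeval_def,
    ← Polynomial.eval_map, descPochhammer_map, descPochhammer_eval_eq_prod_range, smul_eq_mul,
    inv_mul_eq_div]

theorem cchoose_eq_ringChoose (x : ℂ) (j : ℕ) : cchoose x j = Ring.choose x j :=
  (ringChoose_eq_prod_div_factorial x j).symm

theorem riordan_identity (n m : ℕ) (x : ℂ) :
    ∑ k ∈ Finset.range (n + 1),
        (n.choose k : ℂ) * (m.choose (n - k) : ℂ) * cchoose (x + ((n - k : ℕ) : ℂ)) (n + m) =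
      cchoose x n * cchoose x m := by
  simpa only [cchoose_eq_ringChoose, Finset.Nat.sum_antidiagonal_eq_sum_range_succ_mk,
    nsmul_eq_mul, Nat.cast_mul] using riordan_identity_general n m x
end

section
/- For every positive integer n, the number of triples (A,B,C) of finite sets with A, B ⊆ {1,…,2n}, C ⊆ {n+1,…,3n}, |A| = |B| = |C| = n, A ⊆ B Δ {1,…,n} (where Δ denotes symmetric difference), and B \ {1,…,n} ⊆ C, equals ∑_{k=0}^{n} C(n,k)^4. -/
/-!
Fix `A` and write `S = {1, …, n}`, `T = {n + 1, …, 2n}`, `p = |S \ A|`, `q = |T \ A|`. The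
involution `B ↦ B ∆ T` turns the conditions `|B| = |T|`, `A ⊆ B ∆ S` on `B` into: a subset of the
complement of `A` with equally many elements `i` in `S` and in `T`. For each such `B` there are
`C(n + i, p + q)` choices of the complement of `C`, so the Riordan–Surányi identity
`∑ i, C(p, i) C(q, i) C(x + i, p + q) = C(x, p) C(x, q)` leaves `C(n, p) C(n, q)` pairs `(B, C)`.
Summing over the sets `A` with `k` elements in `S` and `n - k` in `T`, each of the four binomial
coefficients is `C(n, k)`.
-/

open Finset

section Binomial

theorem choose_mul_choose_eq_choose_mul_choose_sub {n k : ℕ} (m : ℕ) (hk : k ≤ n) :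
    n.choose k * k.choose m = n.choose m * (n - m).choose (n - k) := by
  obtain hmk | hkm := le_or_gt m k
  · rw [Nat.choose_mul hmk, Nat.choose_symm_of_eq_add (show n - m = k - m + (n - k) by lia)]
  · rw [Nat.choose_eq_zero_of_lt hkm, mul_zero]
    obtain hmn | hnm := le_or_gt m n
    · rw [Nat.choose_eq_zero_of_lt (show n - m < n - k by lia), mul_zero]
    · rw [Nat.choose_eq_zero_of_lt hnm, zero_mul]

theorem sum_choose_mul_choose_mul_choose_s7 (p q m : ℕ) :
    ∑ i ∈ range (p + 1), p.choose i * q.choose i * i.choose m =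
      p.choose m * (p - m + q).choose p := by
  rw [add_comm (p - m), Nat.add_choose_eq, Nat.sum_antidiagonal_eq_sum_range_succ_mk, mul_sum]
  refine sum_congr rfl fun i hi => ?_
  rw [mul_right_comm,
    choose_mul_choose_eq_choose_mul_choose_sub m (mem_range_succ_iff.1 hi)]
  ring

theorem add_choose_add_eq_sum_antidiagonal {i q : ℕ} (p x : ℕ) (hi : i ≤ q) :
    (x + i).choose (p + q) = ∑ mr ∈ antidiagonal q, i.choose mr.1 * x.choose (p + mr.2) := by
  rw [add_comm x, Nat.add_choose_eq, Nat.sum_antidiagonal_eq_sum_range_succ_mk,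
    Nat.sum_antidiagonal_eq_sum_range_succ_mk]
  symm
  refine (sum_congr rfl fun m hm => ?_).trans
    (sum_subset (range_subset_range.2 (show q + 1 ≤ p + q + 1 by lia)) fun m _ hm => ?_)
  · rw [Nat.add_sub_assoc (mem_range_succ_iff.1 hm)]
  · rw [mem_range] at hm
    rw [Nat.choose_eq_zero_of_lt (by lia), zero_mul]

theorem sum_choose_mul_choose_mul_choose_add (p q x : ℕ) :
    ∑ i ∈ range (p + 1), p.choose i * q.choose i * (x + i).choose (p + q) =
      x.choose p * x.choose q := by
  have vandermonde (i : ℕ) : p.choose i * q.choose i * (x + i).choose (p + q) =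
      ∑ mr ∈ antidiagonal q,
        x.choose (p + mr.2) * (p.choose i * q.choose i * i.choose mr.1) := by
    obtain hi | hi := le_or_gt i q
    · rw [add_choose_add_eq_sum_antidiagonal p x hi, mul_sum]
      exact sum_congr rfl fun _ _ => by ring
    · simp [Nat.choose_eq_zero_of_lt hi]
  have factor : ∀ mr ∈ antidiagonal q,
      x.choose (p + mr.2) * (p.choose mr.1 * (p - mr.1 + q).choose p) =
        x.choose p * (p.choose mr.1 * (x - p).choose mr.2) := by
    rintro ⟨m, r⟩ hmr
    rw [HasAntidiagonal.mem_antidiagonal] at hmr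
    obtain hmp | hpm := le_or_gt m p
    · have choose_mul := Nat.choose_mul (n := x) (Nat.le_add_right p r)
      rw [Nat.add_sub_cancel_left] at choose_mul
      rw [show p - m + q = p + r by lia]
      linear_combination p.choose m * choose_mul
    · simp [Nat.choose_eq_zero_of_lt hpm]
  calc
    _ = ∑ mr ∈ antidiagonal q, x.choose (p + mr.2) *
          ∑ i ∈ range (p + 1), p.choose i * q.choose i * i.choose mr.1 := by
      simp_rw [vandermonde, mul_sum]
      exact sum_comm
    _ = x.choose p * (p + (x - p)).choose q := by
      simp_rw [sum_choose_mul_choose_mul_choose_s7]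
      rw [sum_congr rfl factor, ← mul_sum, ← Nat.add_choose_eq]
    _ = x.choose p * x.choose q := by
      obtain hpx | hxp := le_or_gt p x
      · rw [Nat.add_sub_cancel' hpx]
      · simp [Nat.choose_eq_zero_of_lt hxp]

end Binomial

section Splitting

variable {α M : Type*} [DecidableEq α] [AddCommMonoid M]

theorem card_filter_powerset_card_inter_card_sdiff (U S : Finset α) (i j : ℕ) :
    #{D ∈ U.powerset | #(D ∩ S) = i ∧ #(D \ S) = j} =
      (#(U ∩ S)).choose i * (#(U \ S)).choose j := by
  rw [← card_powersetCard, ← card_powersetCard, ← card_product]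
  refine card_nbij' (fun D => (D ∩ S, D \ S)) (fun P => P.1 ∪ P.2) ?_ ?_ ?_ ?_
  · intro D hD
    simp only [mem_coe, mem_filter, mem_powerset, mem_product, mem_powersetCard] at hD ⊢
    exact ⟨⟨inter_subset_inter_right hD.1, hD.2.1⟩, sdiff_subset_sdiff hD.1 Subset.rfl, hD.2.2⟩
  · rintro ⟨X, Y⟩ h
    simp only [mem_coe, mem_product, mem_powersetCard, mem_filter, mem_powerset] at h ⊢
    have inter_eq : (X ∪ Y) ∩ S = X := by grind
    have sdiff_eq : (X ∪ Y) \ S = Y := by grind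
    rw [inter_eq, sdiff_eq]
    exact ⟨by grind, h.1.2, h.2.2⟩
  · intro D _
    exact (union_comm _ _).trans (sdiff_union_inter D S)
  · rintro ⟨X, Y⟩ h
    simp only [mem_coe, mem_product, mem_powersetCard] at h
    exact Prod.ext (by grind) (by grind)

theorem sum_filter_powerset_card_inter_card_sdiff (U S : Finset α) (I : Finset (ℕ × ℕ))
    (f : ℕ × ℕ → M) :
    ∑ D ∈ U.powerset with (#(D ∩ S), #(D \ S)) ∈ I, f (#(D ∩ S), #(D \ S)) =
      ∑ ij ∈ I, ((#(U ∩ S)).choose ij.1 * (#(U \ S)).choose ij.2) • f ij := by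
  rw [← sum_fiberwise_of_maps_to' (t := I) (g := fun D => (#(D ∩ S), #(D \ S)))
    (fun D hD => (mem_filter.1 hD).2)]
  refine sum_congr rfl fun ij hij => ?_
  rw [sum_const, ← card_filter_powerset_card_inter_card_sdiff, filter_filter]
  congr 2
  grind

theorem sum_powersetCard_card_inter_card_sdiff (n : ℕ) (U S : Finset α) (f : ℕ × ℕ → M) :
    ∑ A ∈ powersetCard n U, f (#(A ∩ S), #(A \ S)) =
      ∑ ij ∈ antidiagonal n, ((#(U ∩ S)).choose ij.1 * (#(U \ S)).choose ij.2) • f ij := by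
  simp_rw [← sum_filter_powerset_card_inter_card_sdiff, HasAntidiagonal.mem_antidiagonal,
    card_inter_add_card_sdiff, powersetCard_eq_filter]

theorem sum_filter_powerset_card_inter_eq_card_sdiff (U S : Finset α) (f : ℕ → M) :
    ∑ D ∈ U.powerset with #(D ∩ S) = #(D \ S), f #(D \ S) =
      ∑ i ∈ range (#(U ∩ S) + 1), ((#(U ∩ S)).choose i * (#(U \ S)).choose i) • f i := by
  rw [← sum_diag (range (#(U ∩ S) + 1)) fun ij =>
      ((#(U ∩ S)).choose ij.1 * (#(U \ S)).choose ij.2) • f ij.2,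
    ← sum_filter_powerset_card_inter_card_sdiff U S _ fun ij => f ij.2]
  refine sum_congr (filter_congr fun D hD => ?_) fun _ _ => rfl
  simp only [mem_diag, mem_range_succ_iff, iff_and_self]
  exact fun _ => card_le_card (inter_subset_inter_right (mem_powerset.1 hD))

end Splitting

section Triples

variable {α M : Type*} [DecidableEq α] [AddCommMonoid M]

-- Choosing the complement of `C` keeps the formula valid when `c < #T`.
theorem card_filter_powersetCard_superset {T V : Finset α} {c : ℕ} (hTV : T ⊆ V) (hc : c ≤ #V) :
    #{C ∈ powersetCard c V | T ⊆ C} = (#(V \ T)).choose (#V - c) := by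
  have card_sdiff_add : #(V \ T) + #T = #V := card_sdiff_add_card_eq_card hTV
  obtain hTc | hcT := le_or_gt #T c
  · rw [card_filter_powersetCard_subset T V c hTV hTc, ← card_sdiff_of_subset hTV]
    exact Nat.choose_symm_of_eq_add (by lia)
  · rw [Nat.choose_eq_zero_of_lt (by lia), card_eq_zero, filter_eq_empty_iff]
    intro C hC hTC
    exact (card_le_card hTC).not_gt (by rwa [(mem_powersetCard.1 hC).2])

theorem symmDiff_mem_filter_iff_of_disjoint {A B S T : Finset α} (hST : Disjoint S T)
    (hA : A ⊆ S ∪ T) :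
    symmDiff B T ∈ {D ∈ ((S ∪ T) \ A).powerset | #(D ∩ S) = #(D \ S)} ↔
      B ∈ {B ∈ powersetCard #T (S ∪ T) | A ⊆ symmDiff B S} := by
  have subset_iff : symmDiff B T ⊆ (S ∪ T) \ A ↔ B ⊆ S ∪ T ∧ A ⊆ symmDiff B S := by
    simp only [subset_iff, disjoint_left, mem_symmDiff, mem_sdiff, mem_union] at *
    grind
  simp only [mem_filter, mem_powerset, mem_powersetCard, subset_iff, and_assoc,
    and_congr_right_iff]
  intro hB
  rw [disjoint_left] at hST
  have inter_eq : symmDiff B T ∩ S = B \ T := by grind [mem_symmDiff]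
  have sdiff_eq : symmDiff B T \ S = T \ B := by grind [mem_symmDiff]
  rw [inter_eq, sdiff_eq, card_sdiff_eq_card_sdiff_iff, and_comm]

theorem sum_filter_subset_symmDiff {A S T : Finset α} (hST : Disjoint S T) (hA : A ⊆ S ∪ T)
    (f : ℕ → M) :
    ∑ B ∈ powersetCard #T (S ∪ T) with A ⊆ symmDiff B S, f #(T \ B) =
      ∑ i ∈ range (#(S \ A) + 1), ((#(S \ A)).choose i * (#(T \ A)).choose i) • f i := by
  rw [disjoint_left] at hST
  have inter_eq : ((S ∪ T) \ A) ∩ S = S \ A := by grind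
  have sdiff_eq : ((S ∪ T) \ A) \ S = T \ A := by grind
  rw [← inter_eq, ← sdiff_eq, ← sum_filter_powerset_card_inter_eq_card_sdiff]
  refine sum_equiv (symmDiff_left_involutive T).toPerm
    (fun B => (symmDiff_mem_filter_iff_of_disjoint (disjoint_left.2 hST) hA).symm) fun B hB => ?_
  have hBU : B ⊆ S ∪ T := (mem_powersetCard.1 (mem_filter.1 hB).1).1
  have symmDiff_sdiff : symmDiff B T \ S = T \ B := by grind [mem_symmDiff]
  rw [Function.Involutive.coe_toPerm, symmDiff_sdiff]

theorem sum_card_superset_of_subset_symmDiff {A S T V : Finset α} {c : ℕ} (hST : Disjoint S T)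
    (hA : A ⊆ S ∪ T) (hTV : T ⊆ V) (hc : #V + #A = #S + #T + c) :
    ∑ B ∈ powersetCard #T (S ∪ T) with A ⊆ symmDiff B S,
        #{C ∈ powersetCard c V | B \ S ⊆ C} =
      (#(V \ T)).choose #(S \ A) * (#(V \ T)).choose #(T \ A) := by
  have card_A_le : #A ≤ #S + #T := (card_le_card hA).trans (card_union_le S T)
  have card_compl : #V - c = #(S \ A) + #(T \ A) := by
    have := card_sdiff_add_card_eq_card hA
    rw [union_sdiff_distrib, card_union_of_disjoint hST,
      card_union_of_disjoint (hST.mono sdiff_subset sdiff_subset)] at this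
    lia
  have card_supersets : ∀ B ∈ {B ∈ powersetCard #T (S ∪ T) | A ⊆ symmDiff B S},
      #{C ∈ powersetCard c V | B \ S ⊆ C} =
        (#(V \ T) + #(T \ B)).choose (#(S \ A) + #(T \ A)) := by
    intro B hB
    have hBU : B ⊆ S ∪ T := (mem_powersetCard.1 (mem_filter.1 hB).1).1
    have sdiff_eq : V \ (B \ S) = (V \ T) ∪ (T \ B) := by grind [disjoint_left]
    rw [card_filter_powersetCard_superset ((sdiff_le_iff.2 hBU).trans hTV) (by lia), card_compl,
      sdiff_eq, card_union_of_disjoint (disjoint_sdiff_self_left.mono_right sdiff_subset)]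
  rw [sum_congr rfl card_supersets, sum_filter_subset_symmDiff hST hA fun i =>
    (#(V \ T) + i).choose (#(S \ A) + #(T \ A))]
  exact sum_choose_mul_choose_mul_choose_add _ _ _

-- The differences on the right truncate only where a binomial coefficient next to them vanishes.
theorem triple_count_second_general {S T V : Finset α} {a c : ℕ} (hST : Disjoint S T)
    (hTV : T ⊆ V) (hac : #V + a = #S + #T + c) :
    #{p ∈ ((S ∪ T).powerset ×ˢ (S ∪ T).powerset) ×ˢ V.powerset |
        #p.1.1 = a ∧ #p.1.2 = #T ∧ #p.2 = c ∧ p.1.1 ⊆ symmDiff p.1.2 S ∧ p.1.2 \ S ⊆ p.2} =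
      ∑ ij ∈ antidiagonal a, (#S).choose ij.1 * (#T).choose ij.2 *
        ((#(V \ T)).choose (#S - ij.1) * (#(V \ T)).choose (#T - ij.2)) := by
  calc
    _ = ∑ A ∈ powersetCard a (S ∪ T), ∑ B ∈ powersetCard #T (S ∪ T) with A ⊆ symmDiff B S,
          #{C ∈ powersetCard c V | B \ S ⊆ C} := by
      simp only [card_filter, sum_product, sum_filter, powersetCard_eq_filter, ite_and]
      refine sum_congr rfl fun A _ => ?_
      split_ifs
      · refine sum_congr rfl fun B _ => ?_
        split_ifs <;> simp
      · simp
    _ = ∑ A ∈ powersetCard a (S ∪ T), (#(V \ T)).choose (#S - #(A ∩ S)) *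
          (#(V \ T)).choose (#T - #(A \ S)) := by
      refine sum_congr rfl fun A hA => ?_
      obtain ⟨hAU, rfl⟩ := mem_powersetCard.1 hA
      have sdiff_eq : A \ S = A ∩ T := by grind [disjoint_left]
      rw [sum_card_superset_of_subset_symmDiff hST hAU hTV hac, sdiff_eq, ← card_sdiff,
        ← card_sdiff]
    _ = _ := by
      rw [sum_powersetCard_card_inter_card_sdiff a (S ∪ T) S fun ij =>
        (#(V \ T)).choose (#S - ij.1) * (#(V \ T)).choose (#T - ij.2),
        union_inter_cancel_left, union_sdiff_cancel_left hST]
      rfl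

theorem card_triples_eq_sum_choose_pow_four {n : ℕ} {S T V : Finset α} (hST : Disjoint S T)
    (hTV : T ⊆ V) (hS : #S = n) (hT : #T = n) (hV : #V = 2 * n) :
    #{p ∈ ((S ∪ T).powerset ×ˢ (S ∪ T).powerset) ×ˢ V.powerset |
        #p.1.1 = n ∧ #p.1.2 = n ∧ #p.2 = n ∧ p.1.1 ⊆ symmDiff p.1.2 S ∧ p.1.2 \ S ⊆ p.2} =
      ∑ k ∈ range (n + 1), n.choose k ^ 4 := by
  have count := triple_count_second_general (a := n) (c := n) hST hTV (by lia)
  have card_V_sdiff_T : #(V \ T) = n := by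
    rw [card_sdiff_of_subset hTV]
    lia
  rw [hS, hT, card_V_sdiff_T] at count
  rw [count, Nat.sum_antidiagonal_eq_sum_range_succ_mk]
  refine sum_congr rfl fun k hk => ?_
  have hkn : k ≤ n := mem_range_succ_iff.1 hk
  simp only [Nat.choose_symm hkn, Nat.sub_sub_self hkn]
  ring

end Triples

theorem triple_count_second (n : ℕ) (hn : 0 < n) :
    (((((Finset.Icc 1 (2 * n)).powerset ×ˢ (Finset.Icc 1 (2 * n)).powerset) ×ˢ
        (Finset.Icc (n + 1) (3 * n)).powerset).filter
        (fun p : (Finset ℕ × Finset ℕ) × Finset ℕ =>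
          p.1.1.card = n ∧ p.1.2.card = n ∧ p.2.card = n ∧
            p.1.1 ⊆ symmDiff p.1.2 (Finset.Icc 1 n) ∧ p.1.2 \ Finset.Icc 1 n ⊆ p.2)).card) =
      ∑ k ∈ Finset.range (n + 1), (n.choose k) ^ 4 := by
  have hU : Icc 1 (2 * n) = Icc 1 n ∪ Icc (n + 1) (2 * n) := by grind
  have hST : Disjoint (Icc 1 n) (Icc (n + 1) (2 * n)) := by grind [disjoint_left]
  rw [hU]
  exact card_triples_eq_sum_choose_pow_four hST (Icc_subset_Icc_right (by lia))
    (by simp) (by grind [Nat.card_Icc]) (by grind [Nat.card_Icc])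
end
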